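/- arXiv:1807.03214 — 8 statements merged into one kernel-verified Lean document; each statement's English description precedes it below -/
import Mathlib

section
/- For every ε ≥ 0 and all real numbers a, b: φ_ε(a,b) = 0 if and only if a ≥ 0, b ≥ 0, and 2ab = ε². -/
/-!
The equation `φ_ε(a,b) = 0` says `√(a² + b² + ε²) = a + b`. The root dominates both `|a|` and `|b|`,
so `b = √(a² + b² + ε²) - a ≥ 0` and likewise `a ≥ 0`. Once `a + b ≥ 0` is known, the equation is
equivalent to its square, which is `2ab = ε²`.
-/

/-- The smoothed Fischer–Burmeister function `φ_ε(a,b) = a + b - √(a² + b² + ε²)`. -/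
noncomputable def phiFB (ε a b : ℝ) : ℝ := a + b - Real.sqrt (a ^ 2 + b ^ 2 + ε ^ 2)

section

variable {a b c : ℝ}

theorem nonneg_of_sqrt_sq_add_eq_add (hc : 0 ≤ c) (h : √(a ^ 2 + c) = a + b) : 0 ≤ b := by
  have ha : a ≤ √(a ^ 2 + c) := Real.le_sqrt_of_sq_le (le_add_of_nonneg_right hc)
  rwa [h, le_add_iff_nonneg_right] at ha

theorem sqrt_sq_add_sq_add_eq_add_iff_of_nonneg (hc : 0 ≤ c) (hab : 0 ≤ a + b) :
    √(a ^ 2 + b ^ 2 + c) = a + b ↔ 2 * a * b = c := by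
  rw [Real.sqrt_eq_iff_eq_sq (by positivity) hab]
  constructor <;> intro h <;> linarith

theorem sqrt_sq_add_sq_add_eq_add_iff (hc : 0 ≤ c) :
    √(a ^ 2 + b ^ 2 + c) = a + b ↔ 0 ≤ a ∧ 0 ≤ b ∧ 2 * a * b = c := by
  constructor
  · intro h
    have hb : 0 ≤ b :=
      nonneg_of_sqrt_sq_add_eq_add (add_nonneg (sq_nonneg b) hc) (by rwa [← add_assoc])
    have ha : 0 ≤ a :=
      nonneg_of_sqrt_sq_add_eq_add (add_nonneg (sq_nonneg a) hc)
        (by rwa [add_left_comm, ← add_assoc, add_comm b])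
    exact ⟨ha, hb, (sqrt_sq_add_sq_add_eq_add_iff_of_nonneg hc (add_nonneg ha hb)).mp h⟩
  · rintro ⟨ha, hb, h⟩
    exact (sqrt_sq_add_sq_add_eq_add_iff_of_nonneg hc (add_nonneg ha hb)).mpr h

end

/-- For every ε ≥ 0 and all real a, b:
`φ_ε(a,b) = 0 ↔ a ≥ 0 ∧ b ≥ 0 ∧ 2ab = ε²`. -/
theorem statement_0 (ε : ℝ) (hε : 0 ≤ ε) (a b : ℝ) :
    phiFB ε a b = 0 ↔ 0 ≤ a ∧ 0 ≤ b ∧ 2 * a * b = ε ^ 2 := by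
  rw [phiFB, sub_eq_zero, eq_comm]
  exact sqrt_sq_add_sq_add_eq_add_iff (sq_nonneg ε)
end

section
/- Suppose (z*,v*) is a KKT point of the QP (i.e. Hz* + f + Aᵀv* = 0, v* ≥ 0, b − Az* ≥ 0, v*_i(b − Az*)_i = 0 for all i) that satisfies the strong second order sufficient condition: for every u ≠ 0 with A_i u = 0 for all i ∈ I_a⁺(z*,v*) := {i : A_i z* = b_i and v*_i > 0}, one has uᵀHu > 0. Then z* is the unique global minimizer of the QP: for every z with Az ≤ b one has g(z) ≥ g(z*), with equality only if z = z*. -/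
/-!
Write the problem over a vector space: `H` becomes a symmetric bilinear form `B`, and `f` and the
rows of `A` become linear functionals `f` and `aᵢ`. The Lagrangian at the multiplier `v*`,
`L(z) = g(z) - ∑ᵢ v*ᵢ (bᵢ - aᵢ z)`, is quadratic, and stationarity says that its linear part at
`z*` vanishes, so `L(z) = L(z*) + ½ B(z - z*, z - z*)`. As the slack sum is zero at `z*` by
complementarity,
`g(z) - g(z*) = ½ B(z - z*, z - z*) + ∑ᵢ v*ᵢ (bᵢ - aᵢ z)`.
For feasible `z` every term on the right is nonnegative, so `g(z*) ≤ g(z)`. If equality holds, then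
`aᵢ z = bᵢ` whenever `v*ᵢ > 0`, so `aᵢ (z - z*) = 0` on the strongly active constraints, while
`B(z - z*, z - z*) = 0`; the second order condition then forces `z = z*`.
-/

open Matrix

/-- The objective of the QP: `g(z) = ½ zᵀHz + fᵀz`. -/
noncomputable def qpObj (n : ℕ) (H : Matrix (Fin n) (Fin n) ℝ) (f : Fin n → ℝ)
    (z : Fin n → ℝ) : ℝ :=
  (1 / 2) * (z ⬝ᵥ H.mulVec z) + f ⬝ᵥ z

open LinearMap (BilinForm)
open Module (Dual)

section QuadraticObjective

variable {K E : Type*} [Field K] [AddCommGroup E] [Module K E]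

/-- The quadratic objective `z ↦ ½ B(z, z) + f(z)` on a vector space. -/
def quadObj (B : BilinForm K E) (f : Dual K E) (z : E) : K :=
  1 / 2 * B z z + f z

lemma quadObj_sub_quadObj [NeZero (2 : K)] {B : BilinForm K E} (hB : B.IsSymm) (f : Dual K E)
    (z w : E) :
    quadObj B f z - quadObj B f w = 1 / 2 * B (z - w) (z - w) + (B w + f) (z - w) := by
  simp only [quadObj, map_sub, LinearMap.sub_apply, LinearMap.add_apply, hB.eq z w]
  field_simp
  ring

end QuadraticObjective

section WeightedSlack

variable {R M ι : Type*} [CommRing R] [AddCommGroup M] [Module R M]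
  {a : ι → Dual R M} {b : ι → R} {v : ι →₀ R} {z : M}

/-- The total slack `∑ᵢ vᵢ (bᵢ - aᵢ z)` of the constraints `aᵢ z ≤ bᵢ`, weighted by multipliers `v`.
It is what the Lagrangian subtracts from the objective. There may be infinitely many constraints,
so the multipliers are taken to be finitely supported. -/
def weightedSlack (a : ι → Dual R M) (b : ι → R) (v : ι →₀ R) (z : M) : R :=
  v.sum fun i c ↦ c * (b i - a i z)

/-- The index set `I_a⁺(z, v)` of the constraints `aᵢ z ≤ bᵢ` that are active at `z` and carry a
positive multiplier; the second order condition tests the directions annihilated by their `aᵢ`. -/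
def stronglyActiveSet [LT R] (a : ι → Dual R M) (b : ι → R) (z : M) (v : ι →₀ R) : Set ι :=
  {i | a i z = b i ∧ 0 < v i}

lemma weightedSlack_sub_weightedSlack (a : ι → Dual R M) (b : ι → R) (v : ι →₀ R) (z w : M) :
    weightedSlack a b v z - weightedSlack a b v w =
      -Finsupp.linearCombination R a v (z - w) := by
  simp only [weightedSlack, Finsupp.linearCombination_apply, Finsupp.sum, LinearMap.sum_apply,
    LinearMap.smul_apply, smul_eq_mul, map_sub, ← Finset.sum_sub_distrib, ← Finset.sum_neg_distrib]
  exact Finset.sum_congr rfl fun i _ ↦ by ring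

lemma weightedSlack_eq_zero_of_complementary (hcomp : ∀ i, v i * (b i - a i z) = 0) :
    weightedSlack a b v z = 0 :=
  Finset.sum_eq_zero fun i _ ↦ hcomp i

variable [PartialOrder R] [IsOrderedRing R]

lemma weightedSlack_nonneg (hv : ∀ i, 0 ≤ v i) (hz : ∀ i, a i z ≤ b i) :
    0 ≤ weightedSlack a b v z :=
  Finset.sum_nonneg fun i _ ↦ mul_nonneg (hv i) (sub_nonneg.2 (hz i))

lemma apply_eq_of_weightedSlack_eq_zero [NoZeroDivisors R] (hv : ∀ i, 0 ≤ v i)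
    (hz : ∀ i, a i z ≤ b i) (hslack : weightedSlack a b v z = 0) {i : ι} (hi : 0 < v i) :
    a i z = b i := by
  have hterm_nonneg : ∀ j ∈ v.support, 0 ≤ v j * (b j - a j z) := fun j _ ↦
    mul_nonneg (hv j) (sub_nonneg.2 (hz j))
  have hterm : v i * (b i - a i z) = 0 :=
    (Finset.sum_eq_zero_iff_of_nonneg hterm_nonneg).1 hslack i (Finsupp.mem_support_iff.2 hi.ne')
  exact (sub_eq_zero.1 ((mul_eq_zero.1 hterm).resolve_left hi.ne')).symm

end WeightedSlack

section KKT

variable {K E ι : Type*} [Field K] [AddCommGroup E] [Module K E]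

lemma quadObj_sub_quadObj_of_stationary [NeZero (2 : K)] {B : BilinForm K E} (hB : B.IsSymm)
    {f : Dual K E} {a : ι → Dual K E} {b : ι → K} {zs : E} {v : ι →₀ K}
    (hstat : B zs + f + Finsupp.linearCombination K a v = 0)
    (hcomp : ∀ i, v i * (b i - a i zs) = 0) (z : E) :
    quadObj B f z - quadObj B f zs =
      1 / 2 * B (z - zs) (z - zs) + weightedSlack a b v z := by
  rw [quadObj_sub_quadObj hB, eq_neg_of_add_eq_zero_left hstat, LinearMap.neg_apply,
    ← weightedSlack_sub_weightedSlack a b, weightedSlack_eq_zero_of_complementary hcomp, sub_zero]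

theorem statement_4_general [LinearOrder K] [IsStrictOrderedRing K]
    {B : BilinForm K E} (hB : B.IsPosSemidef) {f : Dual K E} {a : ι → Dual K E} {b : ι → K}
    {zs : E} {vs : ι →₀ K}
    (hstat : B zs + f + Finsupp.linearCombination K a vs = 0)
    (hv : ∀ i, 0 ≤ vs i)
    (hcomp : ∀ i, vs i * (b i - a i zs) = 0)
    (hssosc : ∀ u : E, u ≠ 0 → (∀ i ∈ stronglyActiveSet a b zs vs, a i u = 0) → 0 < B u u) :
    ∀ z : E, (∀ i, a i z ≤ b i) →
      quadObj B f zs ≤ quadObj B f z ∧ (quadObj B f z = quadObj B f zs → z = zs) := by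
  intro z hz
  have hgap := quadObj_sub_quadObj_of_stationary hB.isSymm hstat hcomp z
  have hquad : 0 ≤ B (z - zs) (z - zs) := hB.nonneg (z - zs)
  have hslack : 0 ≤ weightedSlack a b vs z := weightedSlack_nonneg hv hz
  refine ⟨by linarith, fun heq ↦ ?_⟩
  have hslack_zero : weightedSlack a b vs z = 0 := by linarith
  have hactive : ∀ i ∈ stronglyActiveSet a b zs vs, a i (z - zs) = 0 := by
    rintro i ⟨hzs, hi⟩
    rw [map_sub, apply_eq_of_weightedSlack_eq_zero hv hz hslack_zero hi, hzs, sub_self]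
  by_contra hne
  have hquad_pos := hssosc (z - zs) (sub_ne_zero.2 hne) hactive
  linarith

end KKT

section Matrix

variable {m n R : Type*} [Fintype m] [Fintype n] [DecidableEq n] [CommRing R]

lemma toBilin'_apply_eq_dotProductEquiv {H : Matrix n n R} (hH : H.IsSymm) (z : n → R) :
    H.toBilin' z = dotProductEquiv R n (H *ᵥ z) := by
  refine LinearMap.ext fun w ↦ ?_
  rw [toBilin'_apply', dotProduct_mulVec, ← mulVec_transpose, hH.eq]
  rfl

lemma linearCombination_dotProductEquiv (A : Matrix m n R) (v : m → R) :
    Finsupp.linearCombination R (fun i ↦ dotProductEquiv R n (A i))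
      (Finsupp.equivFunOnFinite.symm v) = dotProductEquiv R n (Aᵀ *ᵥ v) := by
  rw [mulVec_transpose, vecMul_eq_sum, map_sum]
  simp [Finsupp.linearCombination_apply, Finsupp.sum_fintype, ← map_smul]

lemma stationary_toBilin' {H : Matrix n n R} (hH : H.IsSymm) {A : Matrix m n R} {f z : n → R}
    {v : m → R} (hstat : H *ᵥ z + f + Aᵀ *ᵥ v = 0) :
    H.toBilin' z + dotProductEquiv R n f +
      Finsupp.linearCombination R (fun i ↦ dotProductEquiv R n (A i))
        (Finsupp.equivFunOnFinite.symm v) = 0 := by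
  rw [toBilin'_apply_eq_dotProductEquiv hH, linearCombination_dotProductEquiv, ← map_add,
    ← map_add, hstat, map_zero]

lemma isPosSemidef_toBilin' [PartialOrder R] [StarRing R] [TrivialStar R]
    {H : Matrix n n R} (hH : H.PosSemidef) : H.toBilin'.IsPosSemidef := by
  refine LinearMap.BilinForm.isPosSemidef_def.2 ⟨?_, ⟨fun x ↦ ?_⟩⟩
  · exact isSymm_toBilin'_iff_isSymm.2 (isHermitian_iff_isSymm.1 hH.isHermitian)
  · simpa only [toBilin'_apply', star_trivial] using hH.dotProduct_mulVec_nonneg x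

end Matrix

lemma quadObj_toBilin' {n : ℕ} (H : Matrix (Fin n) (Fin n) ℝ) (f : Fin n → ℝ) :
    quadObj H.toBilin' (dotProductEquiv ℝ (Fin n) f) = qpObj n H f := by
  funext z
  rw [quadObj, toBilin'_apply', qpObj]
  rfl

/-- a KKT point `(z*, v*)` of the QP satisfying the strong second order
sufficient condition is such that `z*` is the unique global minimizer of the QP. -/
theorem statement_4 (n q : ℕ) (H : Matrix (Fin n) (Fin n) ℝ) (hH : H.PosSemidef)
    (A : Matrix (Fin q) (Fin n) ℝ) (f : Fin n → ℝ) (b : Fin q → ℝ)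
    (zs : Fin n → ℝ) (vs : Fin q → ℝ)
    (hstat : H.mulVec zs + f + Aᵀ.mulVec vs = 0)
    (hv : ∀ i, 0 ≤ vs i)
    (hfeas : ∀ i, A.mulVec zs i ≤ b i)
    (hcomp : ∀ i, vs i * (b i - A.mulVec zs i) = 0)
    (hssosc : ∀ u : Fin n → ℝ, u ≠ 0 →
      (∀ i, A.mulVec zs i = b i ∧ 0 < vs i → A i ⬝ᵥ u = 0) →
      0 < u ⬝ᵥ H.mulVec u) :
    ∀ z : Fin n → ℝ, (∀ i, A.mulVec z i ≤ b i) →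
      qpObj n H f zs ≤ qpObj n H f z ∧ (qpObj n H f z = qpObj n H f zs → z = zs) := by
  have hstat' := stationary_toBilin' (isHermitian_iff_isSymm.1 hH.isHermitian) hstat
  rw [← quadObj_toBilin']
  exact statement_4_general (isPosSemidef_toBilin' hH) hstat' hv hcomp fun u hu hactive ↦
    (hssosc u hu hactive).trans_eq (toBilin'_apply' H u u).symm
end

section
/- Let H be a symmetric positive semidefinite n×n real matrix and A a q×n real matrix with ker H ∩ ker A = {0}, and let C and D be q×q diagonal matrices with strictly positive diagonal entries. Then the (n+q)×(n+q) block matrix V = [[H, Aᵀ], [−CA, D]] is invertible. -/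
open Matrix

/-! Factoring `diag(1, C)` out of the block matrix leaves `[[H, Aᵀ], [-A, C⁻¹D]]`. Its off-diagonal
blocks cancel in the quadratic form, whose value at `(u, v)` is `uᵀHu + vᵀC⁻¹Dv`. On the kernel
this vanishes, so `v = 0`; then `Hu = 0` and `Au = 0`, whence `u = 0`. -/

section CommRing

variable {m n R : Type*} [Fintype m] [Fintype n] [CommRing R]

theorem dotProduct_diagonal_mulVec_pos [DecidableEq m] [LinearOrder R] [IsStrictOrderedRing R]
    {e : m → R} (he : ∀ i, 0 < e i) {v : m → R} (hv : v ≠ 0) :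
    0 < v ⬝ᵥ diagonal e *ᵥ v := by
  have form_eq_sum : v ⬝ᵥ diagonal e *ᵥ v = ∑ i, e i * v i ^ 2 :=
    Finset.sum_congr rfl fun i _ => by rw [mulVec_diagonal]; ring
  obtain ⟨i, hi⟩ := Function.ne_iff.1 hv
  rw [form_eq_sum]
  exact Finset.sum_pos' (fun j _ => mul_nonneg (he j).le (sq_nonneg _))
    ⟨i, Finset.mem_univ i, mul_pos (he i) (sq_pos_of_ne_zero hi)⟩

theorem dotProduct_fromBlocks_transpose_neg_mulVec (H : Matrix n n R) (A : Matrix m n R)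
    (E : Matrix m m R) (u : n → R) (v : m → R) :
    Sum.elim u v ⬝ᵥ fromBlocks H Aᵀ (-A) E *ᵥ Sum.elim u v = u ⬝ᵥ H *ᵥ u + v ⬝ᵥ E *ᵥ v := by
  have cross_terms : u ⬝ᵥ Aᵀ *ᵥ v = v ⬝ᵥ A *ᵥ u := by
    rw [dotProduct_mulVec, vecMul_transpose, dotProduct_comm]
  simp only [fromBlocks_mulVec, Sum.elim_comp_inl, Sum.elim_comp_inr, sumElim_dotProduct_sumElim,
    dotProduct_add, neg_mulVec, dotProduct_neg, cross_terms]
  ring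

theorem mulVec_fromBlocks_transpose_neg_injective [PartialOrder R] [IsOrderedAddMonoid R]
    {H : Matrix n n R} {A : Matrix m n R} {E : Matrix m m R} (hH : ∀ u, 0 ≤ u ⬝ᵥ H *ᵥ u)
    (hE : ∀ v ≠ 0, 0 < v ⬝ᵥ E *ᵥ v) (hker : ∀ u, H *ᵥ u = 0 → A *ᵥ u = 0 → u = 0) :
    Function.Injective (fromBlocks H Aᵀ (-A) E).mulVec := by
  refine (injective_iff_map_eq_zero (mulVecLin _)).2 fun w hw => ?_
  obtain ⟨u, v, rfl⟩ : ∃ u v, w = Sum.elim u v := ⟨_, _, (Sum.elim_comp_inl_inr w).symm⟩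
  rw [mulVecLin_apply] at hw
  have form_eq_zero : u ⬝ᵥ H *ᵥ u + v ⬝ᵥ E *ᵥ v = 0 := by
    rw [← dotProduct_fromBlocks_transpose_neg_mulVec H A, hw, dotProduct_zero]
  obtain rfl : v = 0 := by
    by_contra hv
    exact (add_pos_of_nonneg_of_pos (hH u) (hE v hv)).ne' form_eq_zero
  obtain ⟨hHu, hAu⟩ : H *ᵥ u = 0 ∧ A *ᵥ u = 0 := by
    simpa [fromBlocks_mulVec, neg_mulVec, Sum.elim_eq_iff, ← Sum.elim_zero_zero] using hw
  rw [hker u hHu hAu, Sum.elim_zero_zero]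

end CommRing

theorem statement_7_general {m n K : Type*} [Fintype m] [DecidableEq m] [Fintype n] [DecidableEq n]
    [Field K] [LinearOrder K] [IsStrictOrderedRing K]
    {H : Matrix n n K} (hH : ∀ u, 0 ≤ u ⬝ᵥ H *ᵥ u) {A : Matrix m n K}
    (hker : ∀ u, H *ᵥ u = 0 → A *ᵥ u = 0 → u = 0) {c d : m → K} (hcd : ∀ i, 0 < c i * d i) :
    IsUnit (fromBlocks H Aᵀ (-(diagonal c * A)) (diagonal d)) := by
  have hc : ∀ i, c i ≠ 0 := fun i => left_ne_zero_of_mul (hcd i).ne'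
  have hratio : ∀ i, 0 < d i / c i := fun i => by
    rw [div_pos_iff, ← mul_pos_iff, mul_comm]
    exact hcd i
  have factorization : fromBlocks H Aᵀ (-(diagonal c * A)) (diagonal d) =
      fromBlocks 1 0 0 (diagonal c) * fromBlocks H Aᵀ (-A) (diagonal fun i => d i / c i) := by
    simp [fromBlocks_multiply, mul_div_cancel₀ _ (hc _)]
  have scaling_isUnit : IsUnit (fromBlocks (1 : Matrix n n K) 0 0 (diagonal c)) :=
    isUnit_fromBlocks_zero₂₁.2
      ⟨isUnit_one, isUnit_diagonal.2 (Pi.isUnit_iff.2 fun i => (hc i).isUnit)⟩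
  rw [factorization]
  exact scaling_isUnit.mul <| mulVec_injective_iff_isUnit.1 <|
    mulVec_fromBlocks_transpose_neg_injective hH
      (fun _ => dotProduct_diagonal_mulVec_pos hratio) hker

/-- if `H` is symmetric positive semidefinite, `ker H ∩ ker A = {0}`, and
`C`, `D` are diagonal with strictly positive diagonal entries, then the block matrix
`V = [[H, Aᵀ], [−CA, D]]` is invertible. -/
theorem statement_7 (n q : ℕ) (H : Matrix (Fin n) (Fin n) ℝ) (hH : H.PosSemidef)
    (A : Matrix (Fin q) (Fin n) ℝ)
    (hker : ∀ u : Fin n → ℝ, H.mulVec u = 0 → A.mulVec u = 0 → u = 0)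
    (c d : Fin q → ℝ) (hc : ∀ i, 0 < c i) (hd : ∀ i, 0 < d i) :
    IsUnit (Matrix.fromBlocks H Aᵀ (-(Matrix.diagonal c * A)) (Matrix.diagonal d)) :=
  statement_7_general hH.dotProduct_mulVec_nonneg hker fun i => mul_pos (hc i) (hd i)
end

section
/- Fix ε > 0 and δ ≥ 0. Let H be a symmetric positive semidefinite n×n real matrix, A a q×n real matrix with ker H ∩ ker A = {0}, b ∈ ℝ^q, and let (z,v) ∈ ℝⁿ × ℝ^q with y = b − Az. Define the diagonal matrices C = diag(γ) and D = diag(μ) with entries γ_i = 1 − y_i/√(y_i² + v_i² + ε²) + δ and μ_i = 1 − v_i/√(y_i² + v_i² + ε²) + δ. Then the block matrix K = [[H, Aᵀ], [−CA, D]] is invertible. -/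
/-!
Since `D` is invertible, `K` is invertible if and only if its Schur complement
`H + Aᵀ D⁻¹ C A` is. The regularization `ε > 0` makes every `γᵢ` and `μᵢ` positive, so `D⁻¹ C` is
positive definite. If `(H + Aᵀ D⁻¹ C A) x = 0`, pairing with `x` shows that the nonnegative numbers
`xᵀ H x` and `(A x)ᵀ D⁻¹ C (A x)` sum to zero, whence `A x = 0`. The equation then reduces to
`H x = 0`, and `x = 0` by the kernel condition.
-/

open Matrix

section BlockMatrix

variable {m n R : Type*} [Fintype m] [DecidableEq m] [Fintype n]

theorem isUnit_fromBlocks_mul_iff [DecidableEq n] [CommRing R] {D : Matrix n n R} (hD : IsUnit D)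
    (H : Matrix m m R) (B : Matrix m n R) (E : Matrix n m R) :
    IsUnit (fromBlocks H B (D * E) D) ↔ IsUnit (H - B * E) := by
  obtain ⟨_⟩ := hD.nonempty_invertible
  rw [isUnit_fromBlocks_iff_of_invertible₂₂, Matrix.mul_assoc, Matrix.invOf_mul_cancel_left]

theorem dotProduct_diagonal_mulVec_pos_s8 [DecidableEq n] [CommRing R] [LinearOrder R]
    [IsStrictOrderedRing R] {w y : n → R} (hw : ∀ i, 0 < w i) (hy : y ≠ 0) :
    0 < y ⬝ᵥ diagonal w *ᵥ y := by
  obtain ⟨i, hi⟩ := Function.ne_iff.1 hy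
  simp only [dotProduct, mulVec_diagonal, mul_left_comm (y _)]
  exact Finset.sum_pos' (fun j _ => mul_nonneg (hw j).le (mul_self_nonneg _))
    ⟨i, Finset.mem_univ i, mul_pos (hw i) (mul_self_pos.2 hi)⟩

variable [Field R] [LinearOrder R] [IsStrictOrderedRing R]

theorem isUnit_add_transpose_mul_mul {H : Matrix m m R} {W : Matrix n n R}
    {A : Matrix n m R} (hH : ∀ x, 0 ≤ x ⬝ᵥ H *ᵥ x) (hW : ∀ y, y ≠ 0 → 0 < y ⬝ᵥ W *ᵥ y)
    (hker : ∀ x, H *ᵥ x = 0 → A *ᵥ x = 0 → x = 0) :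
    IsUnit (H + Aᵀ * (W * A)) := by
  rw [← mulVec_injective_iff_isUnit, ← coe_mulVecLin, ← LinearMap.ker_eq_bot,
    ker_mulVecLin_eq_bot_iff]
  intro x hx
  have hsum : H *ᵥ x + Aᵀ *ᵥ (W *ᵥ (A *ᵥ x)) = 0 := by
    simpa only [add_mulVec, mulVec_mulVec] using hx
  have hquad : x ⬝ᵥ H *ᵥ x + (A *ᵥ x) ⬝ᵥ W *ᵥ (A *ᵥ x) = 0 := by
    simpa only [dotProduct_add, dotProduct_mulVec x Aᵀ, vecMul_transpose, dotProduct_zero]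
      using congrArg (x ⬝ᵥ ·) hsum
  have hAx : A *ᵥ x = 0 := by
    by_contra hne
    exact (add_pos_of_nonneg_of_pos (hH x) (hW _ hne)).ne' hquad
  have hHx : H *ᵥ x = 0 := by
    simpa only [hAx, mulVec_zero, add_zero] using hsum
  exact hker x hHx hAx

theorem isUnit_fromBlocks_transpose_neg_diagonal_mul [DecidableEq n]
    {H : Matrix m m R} {A : Matrix n m R} {γ μ : n → R}
    (hH : ∀ x, 0 ≤ x ⬝ᵥ H *ᵥ x) (hker : ∀ x, H *ᵥ x = 0 → A *ᵥ x = 0 → x = 0)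
    (hγ : ∀ i, 0 < γ i) (hμ : ∀ i, 0 < μ i) :
    IsUnit (fromBlocks H Aᵀ (-(diagonal γ * A)) (diagonal μ)) := by
  have hD : IsUnit (diagonal μ) :=
    isUnit_diagonal.2 (Pi.isUnit_iff.2 fun i => (hμ i).ne'.isUnit)
  have hfactor : diagonal γ = diagonal μ * diagonal fun i => γ i / μ i := by
    simp only [diagonal_mul_diagonal, mul_div_cancel₀ _ (hμ _).ne']
  rw [hfactor, Matrix.mul_assoc, ← Matrix.mul_neg, isUnit_fromBlocks_mul_iff hD, Matrix.mul_neg,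
    sub_neg_eq_add]
  exact isUnit_add_transpose_mul_mul hH
    (fun _ => dotProduct_diagonal_mulVec_pos_s8 fun i => div_pos (hγ i) (hμ i)) hker

end BlockMatrix

theorem div_sqrt_lt_one_of_sq_lt {a s : ℝ} (h : a ^ 2 < s) : a / √s < 1 :=
  (div_lt_one (Real.sqrt_pos.2 ((sq_nonneg a).trans_lt h))).2 (Real.lt_sqrt_of_sq_lt h)

theorem statement_8_general {m n : Type*} [Fintype m] [DecidableEq m] [Fintype n] [DecidableEq n]
    {ε δ : ℝ} (hε : 0 < ε) (hδ : 0 ≤ δ)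
    {H : Matrix m m ℝ} (hH : ∀ x, 0 ≤ x ⬝ᵥ H *ᵥ x)
    {A : Matrix n m ℝ} (hker : ∀ x, H *ᵥ x = 0 → A *ᵥ x = 0 → x = 0)
    {y v γ μ : n → ℝ}
    (hγ : ∀ i, γ i = 1 - y i / √(y i ^ 2 + v i ^ 2 + ε ^ 2) + δ)
    (hμ : ∀ i, μ i = 1 - v i / √(y i ^ 2 + v i ^ 2 + ε ^ 2) + δ) :
    IsUnit (fromBlocks H Aᵀ (-(diagonal γ * A)) (diagonal μ)) := by
  have hε2 : 0 < ε ^ 2 := pow_pos hε 2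
  refine isUnit_fromBlocks_transpose_neg_diagonal_mul hH hker (fun i => ?_) (fun i => ?_)
  · have : y i / √(y i ^ 2 + v i ^ 2 + ε ^ 2) < 1 :=
      div_sqrt_lt_one_of_sq_lt (by linarith [sq_nonneg (v i)])
    linarith [hγ i]
  · have : v i / √(y i ^ 2 + v i ^ 2 + ε ^ 2) < 1 :=
      div_sqrt_lt_one_of_sq_lt (by linarith [sq_nonneg (y i)])
    linarith [hμ i]

/-- for `ε > 0`, `δ ≥ 0`, `H` symmetric positive semidefinite with
`ker H ∩ ker A = {0}`, and the FBRS diagonal matrices `C = diag(γ)`, `D = diag(μ)` with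
`γᵢ = 1 − yᵢ/√(yᵢ² + vᵢ² + ε²) + δ`, `μᵢ = 1 − vᵢ/√(yᵢ² + vᵢ² + ε²) + δ`, `y = b − Az`,
the iteration matrix `K = [[H, Aᵀ], [−CA, D]]` is invertible. -/
theorem statement_8 (n q : ℕ) (ε δ : ℝ) (hε : 0 < ε) (hδ : 0 ≤ δ)
    (H : Matrix (Fin n) (Fin n) ℝ) (hH : H.PosSemidef)
    (A : Matrix (Fin q) (Fin n) ℝ)
    (hker : ∀ u : Fin n → ℝ, H.mulVec u = 0 → A.mulVec u = 0 → u = 0)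
    (b : Fin q → ℝ) (z : Fin n → ℝ) (v : Fin q → ℝ)
    (y : Fin q → ℝ) (hy : y = b - A.mulVec z)
    (γ μ : Fin q → ℝ)
    (hγ : ∀ i, γ i = 1 - y i / Real.sqrt (y i ^ 2 + v i ^ 2 + ε ^ 2) + δ)
    (hμ : ∀ i, μ i = 1 - v i / Real.sqrt (y i ^ 2 + v i ^ 2 + ε ^ 2) + δ) :
    IsUnit (Matrix.fromBlocks H Aᵀ (-(Matrix.diagonal γ * A)) (Matrix.diagonal μ)) :=
  statement_8_general hε hδ hH.dotProduct_mulVec_nonneg hker hγ hμ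
end

section
/- The function ψ : ℝ² → ℝ defined by ψ(a,b) = ½(a + b − √(a² + b²))², i.e. one half the square of the (non-smooth) Fischer–Burmeister function, is continuously differentiable on all of ℝ², and its gradient at the origin is (0,0). -/
/-!
A power `f ^ n`, `n ≥ 2`, of a locally Lipschitz function `f` that is `C¹` off its zero set is `C¹`
everywhere. At a zero `x` of `f` one has `f y = O(y - x)`, so `f ^ n` has derivative `0` at `x`;
elsewhere its derivative is `n f ^ (n - 1) • Df`, which tends to `0` at `x` because `Df` is bounded
near `x` by the Lipschitz constant. The Fischer–Burmeister function is a linear form minus the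
Euclidean norm: it is Lipschitz, and it is smooth away from the origin, where it vanishes.
-/

open Asymptotics Filter Topology

section LocallyLipschitz

theorem isBigO_sub_of_locallyLipschitz {E F : Type*} [SeminormedAddCommGroup E]
    [SeminormedAddCommGroup F] {f : E → F} (hf : LocallyLipschitz f) (x : E) :
    (fun y => f y - f x) =O[𝓝 x] fun y => y - x := by
  obtain ⟨K, s, hs, hK⟩ := hf x
  refine IsBigO.of_bound K ?_
  filter_upwards [hs] with y hy using hK.norm_sub_le hy (mem_of_mem_nhds hs)

variable {𝕜 E : Type*} [NontriviallyNormedField 𝕜] [NormedAddCommGroup E] [NormedSpace 𝕜 E]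

variable (𝕜) in
theorem isBoundedUnder_norm_fderiv_of_locallyLipschitz {F : Type*} [NormedAddCommGroup F]
    [NormedSpace 𝕜 F] {f : E → F} (hf : LocallyLipschitz f) (x : E) :
    IsBoundedUnder (· ≤ ·) (𝓝 x) fun y => ‖fderiv 𝕜 f y‖ := by
  obtain ⟨K, s, hs, hK⟩ := hf x
  refine isBoundedUnder_of_eventually_le (a := (K : ℝ)) ?_
  filter_upwards [eventually_mem_nhds_iff.2 hs] with y hy using
    norm_fderiv_le_of_lipschitzOn 𝕜 hy hK

variable (𝕜) in
theorem hasFDerivAt_pow_of_isBigO_sub {𝔸 : Type*} [NormedRing 𝔸] [NormedAlgebra 𝕜 𝔸]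
    {f : E → 𝔸} {x : E} (hf : f =O[𝓝 x] fun y => y - x) {n : ℕ} (hn : 1 < n) :
    HasFDerivAt (fun y => f y ^ n) (0 : E →L[𝕜] 𝔸) x :=
  (hf.norm_right.pow n).hasFDerivAt hn

variable {f : E → 𝕜} {n : ℕ}

/-- Where `f` is not differentiable, `fderiv 𝕜 f x` is the junk value `0`; this happens only at
zeros of `f`, where the scalar factor vanishes as well. -/
theorem hasFDerivAt_pow_of_locallyLipschitz (hf : LocallyLipschitz f)
    (hd : ∀ x, f x ≠ 0 → DifferentiableAt 𝕜 f x) (hn : 1 < n) (x : E) :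
    HasFDerivAt (fun y => f y ^ n) ((n • f x ^ (n - 1)) • fderiv 𝕜 f x) x := by
  by_cases hx : f x = 0
  · have hn' : n - 1 ≠ 0 := by lia
    have hO : f =O[𝓝 x] fun y => y - x := by
      simpa only [hx, sub_zero] using isBigO_sub_of_locallyLipschitz hf x
    refine (hasFDerivAt_pow_of_isBigO_sub 𝕜 hO hn).congr_fderiv ?_
    ext
    simp [hx, hn']
  · exact (hd x hx).hasFDerivAt.pow n

theorem contDiff_one_pow_of_locallyLipschitz (hf : LocallyLipschitz f)
    (hd : ∀ x, f x ≠ 0 → ContDiffAt 𝕜 1 f x) (hn : 1 < n) :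
    ContDiff 𝕜 1 fun x => f x ^ n := by
  have hderiv := hasFDerivAt_pow_of_locallyLipschitz hf
    (fun x hx => (hd x hx).differentiableAt one_ne_zero) hn
  refine contDiff_one_iff_fderiv.2
    ⟨fun x => (hderiv x).differentiableAt, continuous_iff_continuousAt.2 fun x => ?_⟩
  by_cases hx : f x = 0
  · have hn' : n - 1 ≠ 0 := by lia
    have hpow : Tendsto (fun y => n • f y ^ (n - 1)) (𝓝 x) (𝓝 0) := by
      simpa [hx, hn'] using ((hf.continuous.tendsto x).pow (n - 1)).const_mul (n : 𝕜)
    have hlim := hpow.zero_smul_isBoundedUnder_le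
      (isBoundedUnder_norm_fderiv_of_locallyLipschitz 𝕜 hf x)
    have hzero : (n • f x ^ (n - 1)) • fderiv 𝕜 f x = 0 := by
      ext
      simp [hx, hn']
    simpa only [ContinuousAt, funext fun y => (hderiv y).fderiv, hzero] using hlim
  · exact (((hd x hx).pow n).fderiv_right (m := 0) le_rfl).continuousAt

end LocallyLipschitz

/-- The Fischer–Burmeister function `(a, b) ↦ a + b - √(a² + b²)`, as a function of the pair
`p = (a, b)`. -/
noncomputable def fischerBurmeister (p : ℝ × ℝ) : ℝ :=
  p.1 + p.2 - √(p.1 ^ 2 + p.2 ^ 2)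

theorem fischerBurmeister_zero : fischerBurmeister 0 = 0 := by
  simp [fischerBurmeister]

theorem fischerBurmeister_eq_sub_norm_toLp (p : ℝ × ℝ) :
    fischerBurmeister p = p.1 + p.2 - ‖WithLp.toLp 2 p‖ := by
  simp [fischerBurmeister, WithLp.prod_norm_eq_of_L2]

theorem lipschitzWith_fischerBurmeister : LipschitzWith (2 + NNReal.sqrt 2) fischerBurmeister := by
  have hnorm : LipschitzWith (NNReal.sqrt 2) fun p : ℝ × ℝ => ‖WithLp.toLp 2 p‖ := by
    simpa [NNReal.sqrt_eq_rpow, Function.comp_def] using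
      lipschitzWith_one_norm.comp (WithLp.prod_lipschitzWith_toLp 2 ℝ ℝ)
  simpa only [funext fischerBurmeister_eq_sub_norm_toLp, one_add_one_eq_two] using
    (LipschitzWith.prod_fst.add LipschitzWith.prod_snd).sub hnorm

theorem contDiffAt_fischerBurmeister {n : WithTop ℕ∞} {p : ℝ × ℝ} (hp : p ≠ 0) :
    ContDiffAt ℝ n fischerBurmeister p := by
  have hnorm : ContDiffAt ℝ n (fun p : ℝ × ℝ => ‖WithLp.toLp 2 p‖) p :=
    (WithLp.prodContinuousLinearEquiv 2 ℝ ℝ ℝ).symm.contDiff.contDiffAt.norm ℝ (by simpa using hp)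
  rw [funext fischerBurmeister_eq_sub_norm_toLp]
  exact (contDiffAt_fst.add contDiffAt_snd).sub hnorm

/-- `ψ(a,b) = ½(a + b − √(a² + b²))²`, one half the square of the
(non-smooth) Fischer–Burmeister function, is continuously differentiable on all of
`ℝ²`, and its gradient (Fréchet derivative) at the origin is zero. -/
theorem statement_14 :
    ContDiff ℝ 1 (fun p : ℝ × ℝ =>
        (1 / 2) * (p.1 + p.2 - Real.sqrt (p.1 ^ 2 + p.2 ^ 2)) ^ 2) ∧
      fderiv ℝ (fun p : ℝ × ℝ =>
        (1 / 2) * (p.1 + p.2 - Real.sqrt (p.1 ^ 2 + p.2 ^ 2)) ^ 2) (0, 0) = 0 := by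
  change ContDiff ℝ 1 (fun p => (1 / 2) * fischerBurmeister p ^ 2) ∧
    fderiv ℝ (fun p => (1 / 2) * fischerBurmeister p ^ 2) 0 = 0
  have hlip : LocallyLipschitz fischerBurmeister := lipschitzWith_fischerBurmeister.locallyLipschitz
  have hsmooth (p : ℝ × ℝ) (hp : fischerBurmeister p ≠ 0) : ContDiffAt ℝ 1 fischerBurmeister p :=
    contDiffAt_fischerBurmeister (ne_of_apply_ne _ (hp.trans_eq fischerBurmeister_zero.symm))
  have hderiv := hasFDerivAt_pow_of_locallyLipschitz hlip
    (fun p hp => (hsmooth p hp).differentiableAt one_ne_zero) one_lt_two 0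
  constructor
  · exact contDiff_const.mul (contDiff_one_pow_of_locallyLipschitz hlip hsmooth one_lt_two)
  · simpa [fischerBurmeister_zero] using (hderiv.const_mul (1 / 2)).fderiv
end

section
/- Let E be a finite-dimensional real inner product space, G : E → E continuously differentiable on a neighborhood of x*, with G(x*) = 0, with the derivative DG Lipschitz continuous on a neighborhood of x*, and with DG(x*) invertible. Fix γ ≥ 0. Then there exist η > 0 and r > 0 such that for every x with ‖x − x*‖ ≤ r and every linear map K : E → E with ‖K − DG(x)‖ ≤ γ‖G(x)‖: K is invertible and the regularized Newton step satisfies ‖(x − K⁻¹ G(x)) − x*‖ ≤ η‖x − x*‖². -/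
/-!
Write `A = DG(x*)` and `ρ = ‖x - x*‖`. The Lipschitz bound on `DG` and the mean value inequality
give `G(x) = A (x - x*) + O(ρ²)`. In particular `‖G(x)‖ = O(ρ)`, so every admissible `K` lies
within `O(ρ)` of `A`; since invertibility is an open condition and inversion is continuous, `K` is
invertible with `‖K⁻¹‖` bounded uniformly in `x` and `K`. The new error `e = x - K⁻¹ G(x) - x*`
satisfies `K e = (K - A) (x - x*) - (G(x) - A (x - x*)) = O(ρ²)`, hence `e = O(ρ²)`.
-/

open Filter Topology Asymptotics

theorem isBigO_sub_of_lipschitzOnWith {E F : Type*} [SeminormedAddCommGroup E]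
    [SeminormedAddCommGroup F] {f : E → F} {C : NNReal} {t : Set E} {a : E}
    (hf : LipschitzOnWith C f t) (ht : t ∈ 𝓝 a) :
    (fun x => f x - f a) =O[𝓝 a] fun x => x - a :=
  .of_bound C <| mem_of_superset ht fun _ hx => hf.norm_sub_le hx (mem_of_mem_nhds ht)

theorem isUnit_iff_isInvertible {R M : Type*} [Semiring R] [TopologicalSpace M] [AddCommMonoid M]
    [Module R M] {K : M →L[R] M} : IsUnit K ↔ K.IsInvertible :=
  (ContinuousLinearEquiv.unitsEquiv R M).exists_congr_left

section Newton

variable {𝕜 E F : Type*} [NormedAddCommGroup E] [NormedAddCommGroup F]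

section Perturbation

variable [NontriviallyNormedField 𝕜] [NormedSpace 𝕜 E] [NormedSpace 𝕜 F]

theorem exists_eventually_isInvertible_and_norm_le [CompleteSpace E] {A : E →L[𝕜] F}
    (hA : A.IsInvertible) :
    ∃ b > 0, ∀ᶠ K in 𝓝 A, K.IsInvertible ∧ ∀ v, ‖v‖ ≤ b * ‖K v‖ := by
  have hinv : ∀ᶠ K in 𝓝 A, K.IsInvertible := by
    obtain ⟨e, rfl⟩ := hA
    exact e.nhds
  have hcont : ContinuousAt (fun K : E →L[𝕜] F => ‖K.inverse‖) A :=
    (hA.contDiffAt_map_inverse (n := 0)).continuousAt.norm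
  refine ⟨‖A.inverse‖ + 1, by positivity, ?_⟩
  filter_upwards [hinv, hcont.eventually_lt_const (lt_add_one _)] with K hK hlt
  refine ⟨hK, fun v => ?_⟩
  calc ‖v‖ = ‖K.inverse (K v)‖ := by rw [hK.inverse_apply_self]
    _ ≤ (‖A.inverse‖ + 1) * ‖K v‖ := K.inverse.le_of_opNorm_le hlt.le _

theorem norm_map_newton_error_le {A K : E →L[𝕜] F} {x d a : E} {y : F} (hd : K d = y) :
    ‖K (x - d - a)‖ ≤ ‖K - A‖ * ‖x - a‖ + ‖y - A (x - a)‖ := by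
  have herror : K (x - d - a) = (K - A) (x - a) - (y - A (x - a)) := by
    simp only [← hd, map_sub, sub_apply]
    abel
  rw [herror]
  exact norm_sub_le_of_le ((K - A).le_opNorm _) le_rfl

theorem exists_eventually_isInvertible_and_quasiNewton_error_le [CompleteSpace E] {G : E → F}
    {A : E →L[𝕜] F} {a : E} {M : ℝ} (hA : A.IsInvertible) (hM : 0 ≤ M)
    (hG : (fun x => G x - A (x - a)) =O[𝓝 a] fun x => ‖x - a‖ ^ 2) :
    ∃ η > 0, ∀ᶠ x in 𝓝 a, ∀ K : E →L[𝕜] F, ‖K - A‖ ≤ M * ‖x - a‖ →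
      K.IsInvertible ∧ ∀ d, K d = G x → ‖x - d - a‖ ≤ η * ‖x - a‖ ^ 2 := by
  obtain ⟨b, hb, hnear⟩ := exists_eventually_isInvertible_and_norm_le hA
  obtain ⟨δ, hδ, hball⟩ := Metric.eventually_nhds_iff_ball.mp hnear
  obtain ⟨C, hC, hTaylor⟩ := hG.exists_pos
  have hcont : ContinuousAt (fun x => M * ‖x - a‖) a := by fun_prop
  have hsmall : ∀ᶠ x in 𝓝 a, M * ‖x - a‖ < δ := hcont.eventually_lt_const (by simpa using hδ)
  refine ⟨b * (M + C), by positivity, ?_⟩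
  filter_upwards [hsmall, hTaylor.bound] with x hx hGx K hK
  obtain ⟨hKinv, hKb⟩ := hball K (mem_ball_iff_norm.mpr (hK.trans_lt hx))
  rw [norm_pow, norm_norm] at hGx
  refine ⟨hKinv, fun d hd => ?_⟩
  calc ‖x - d - a‖ ≤ b * ‖K (x - d - a)‖ := hKb _
    _ ≤ b * (‖K - A‖ * ‖x - a‖ + ‖G x - A (x - a)‖) := by
      gcongr
      exact norm_map_newton_error_le hd
    _ ≤ b * (M * ‖x - a‖ * ‖x - a‖ + C * ‖x - a‖ ^ 2) := by gcongr
    _ = b * (M + C) * ‖x - a‖ ^ 2 := by ring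

theorem exists_eventually_norm_regularized_sub_le {G : E → F} {G' : E → E →L[𝕜] F} {a : E}
    (hroot : G a = 0) (hG : HasFDerivAt G (G' a) a)
    (hG' : (fun x => G' x - G' a) =O[𝓝 a] fun x => x - a) (γ : ℝ) :
    ∃ M > 0, ∀ᶠ x in 𝓝 a, ∀ K : E →L[𝕜] F, ‖K - G' x‖ ≤ γ * ‖G x‖ →
      ‖K - G' a‖ ≤ M * ‖x - a‖ := by
  have hGx : G =O[𝓝 a] fun x => x - a := by simpa only [hroot, sub_zero] using hG.isBigO_sub
  obtain ⟨M, hM, hbound⟩ := ((hGx.norm_left.const_mul_left γ).add hG'.norm_left).exists_pos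
  refine ⟨M, hM, hbound.bound.mono fun x hx K hK => ?_⟩
  calc ‖K - G' a‖ ≤ ‖K - G' x‖ + ‖G' x - G' a‖ := norm_sub_le_norm_sub_add_norm_sub _ _ _
    _ ≤ γ * ‖G x‖ + ‖G' x - G' a‖ := by gcongr
    _ ≤ M * ‖x - a‖ := (Real.le_norm_self _).trans hx

end Perturbation

variable [RCLike 𝕜] [NormedSpace 𝕜 E] [NormedSpace 𝕜 F]

theorem isBigO_linearization_error {G : E → F} {G' : E → E →L[𝕜] F} {a : E}
    (hG : ∀ᶠ x in 𝓝 a, HasFDerivAt G (G' x) x)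
    (hG' : (fun x => G' x - G' a) =O[𝓝 a] fun x => x - a) :
    (fun x => G x - G a - G' a (x - a)) =O[𝓝 a] fun x => ‖x - a‖ ^ 2 := by
  let : NormedSpace ℝ E := .restrictScalars ℝ 𝕜 E
  obtain ⟨L, hL, hbound⟩ := hG'.exists_pos
  obtain ⟨R, hR, hball⟩ := Metric.eventually_nhds_iff_ball.mp (hG.and hbound.bound)
  refine .of_bound L <| mem_of_superset (Metric.ball_mem_nhds a hR) fun x hx => ?_
  have hsub : Metric.closedBall a ‖x - a‖ ⊆ Metric.ball a R :=
    Metric.closedBall_subset_ball (mem_ball_iff_norm.mp hx)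
  have hmean : ‖G x - G a - G' a (x - a)‖ ≤ L * ‖x - a‖ * ‖x - a‖ := by
    refine (convex_closedBall a ‖x - a‖).norm_image_sub_le_of_norm_hasFDerivWithin_le'
      (fun z hz => (hball z (hsub hz)).1.hasFDerivWithinAt) (fun z hz => ?_)
      (Metric.mem_closedBall_self (norm_nonneg _)) (mem_closedBall_iff_norm.mpr le_rfl)
    exact (hball z (hsub hz)).2.trans
      (mul_le_mul_of_nonneg_left (mem_closedBall_iff_norm.mp hz) hL.le)
  calc ‖G x - G a - G' a (x - a)‖ ≤ L * ‖x - a‖ * ‖x - a‖ := hmean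
    _ = L * ‖‖x - a‖ ^ 2‖ := by rw [norm_pow, norm_norm]; ring

theorem statement_17_general [CompleteSpace E] {G : E → F} {G' : E → E →L[𝕜] F} {a : E}
    (hroot : G a = 0) (hG : ∀ᶠ x in 𝓝 a, HasFDerivAt G (G' x) x)
    (hG' : (fun x => G' x - G' a) =O[𝓝 a] fun x => x - a) (hinv : (G' a).IsInvertible) (γ : ℝ) :
    ∃ η > 0, ∃ r > 0, ∀ x, ‖x - a‖ ≤ r → ∀ K : E →L[𝕜] F, ‖K - G' x‖ ≤ γ * ‖G x‖ →
      K.IsInvertible ∧ ∀ d, K d = G x → ‖x - d - a‖ ≤ η * ‖x - a‖ ^ 2 := by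
  obtain ⟨M, hM, hK⟩ := exists_eventually_norm_regularized_sub_le hroot hG.self_of_nhds hG' γ
  have hTaylor : (fun x => G x - G' a (x - a)) =O[𝓝 a] fun x => ‖x - a‖ ^ 2 := by
    simpa only [hroot, sub_zero] using isBigO_linearization_error hG hG'
  obtain ⟨η, hη, hstep⟩ :=
    exists_eventually_isInvertible_and_quasiNewton_error_le hinv hM.le hTaylor
  obtain ⟨r, hr, hball⟩ := Metric.nhds_basis_closedBall.eventually_iff.mp (hK.and hstep)
  refine ⟨η, hη, r, hr, fun x hx K hKx => ?_⟩
  obtain ⟨hnear, herror⟩ := hball (mem_closedBall_iff_norm.mpr hx)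
  exact herror K (hnear K hKx)

end Newton

/-- local quadratic convergence of the regularized Newton step.
If `G` is C¹ on a neighborhood of a root `x*`, `DG` is Lipschitz on a neighborhood of
`x*`, and `DG(x*)` is invertible, then for any `γ ≥ 0` there are `η > 0`, `r > 0` such
that for all `x` with `‖x − x*‖ ≤ r` and all linear maps `K` with
`‖K − DG(x)‖ ≤ γ‖G(x)‖`: `K` is invertible and the regularized Newton iterate
`x − K⁻¹G(x)` satisfies `‖x − K⁻¹G(x) − x*‖ ≤ η‖x − x*‖²`. -/
theorem statement_17 {E : Type*} [NormedAddCommGroup E] [InnerProductSpace ℝ E]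
    [FiniteDimensional ℝ E]
    (G : E → E) (xs : E) (hroot : G xs = 0)
    (s : Set E) (hs : s ∈ nhds xs) (hC1 : ContDiffOn ℝ 1 G s)
    (t : Set E) (ht : t ∈ nhds xs) (LG : NNReal)
    (hLip : LipschitzOnWith LG (fun x => fderiv ℝ G x) t)
    (hinv : IsUnit (fderiv ℝ G xs)) (γ : ℝ) (hγ : 0 ≤ γ) :
    ∃ η > (0 : ℝ), ∃ r > (0 : ℝ), ∀ x : E, ‖x - xs‖ ≤ r →
      ∀ K : E →L[ℝ] E, ‖K - fderiv ℝ G x‖ ≤ γ * ‖G x‖ →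
        IsUnit K ∧ ∀ d : E, K d = G x → ‖x - d - xs‖ ≤ η * ‖x - xs‖ ^ 2 := by
  have hG : ∀ᶠ x in 𝓝 xs, HasFDerivAt G (fderiv ℝ G x) x :=
    ((hC1.differentiableOn one_ne_zero).eventually_differentiableAt hs).mono
      fun _ => DifferentiableAt.hasFDerivAt
  simpa only [isUnit_iff_isInvertible] using statement_17_general hroot hG
    (isBigO_sub_of_lipschitzOnWith hLip ht) (isUnit_iff_isInvertible.mp hinv) γ
end

section
/- Let E be a finite-dimensional real inner product space, G : E → E differentiable, and define θ(y) = ½‖G(y)‖². Assume θ is differentiable with gradient Lipschitz continuous on E with constant L_θ > 0. Fix x ∈ E with G(x) ≠ 0, σ ∈ (0, ½), an invertible linear map K : E → E, constants M ≥ ‖K⁻¹‖ and ρ ≥ ‖DG(x) − K‖, and suppose 1 − ρM > σ. Set Δx = −K⁻¹G(x). Then for every t with 0 < t ≤ 1 and t ≤ 2(1 − ρM − σ)/(L_θ M²), the Armijo condition θ(x + tΔx) ≤ (1 − 2tσ)θ(x) holds. -/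
/-!
The Taylor bound `θ (x + tΔx) ≤ θ x + t θ'(x)Δx + (L/2) t² ‖Δx‖²` leaves two quantities to estimate.
Since `DG(x) K⁻¹ G(x) = G(x) + (DG(x) - K) K⁻¹ G(x)` and the last term has norm at most `ρM ‖G x‖`,
the slope `θ'(x)Δx` is at most `-(1 - ρM) ‖G x‖²`, while `‖Δx‖ ≤ M ‖G x‖`. The bound on `t` says
precisely that the quadratic term uses up no more than the part `(1 - ρM - σ) t ‖G x‖²` of the
first-order decrease, so that `t σ ‖G x‖² = 2 t σ θ x` of it remains.
-/

open scoped NNReal InnerProductSpace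

section Descent

variable {E F : Type*} [NormedAddCommGroup E] [NormedSpace ℝ E]
  [NormedAddCommGroup F] [NormedSpace ℝ F] {s : Set E} {L : ℝ≥0}

theorem norm_image_sub_sub_le_of_lipschitzOnWith_hasFDerivWithinAt {f : E → F} {f' : E → E →L[ℝ] F}
    (hs : Convex ℝ s) (hf : ∀ z ∈ s, HasFDerivWithinAt f (f' z) s z) (hf' : LipschitzOnWith L f' s)
    {x y : E} (hx : x ∈ s) (hy : y ∈ s) :
    ‖f y - f x - f' x (y - x)‖ ≤ L / 2 * ‖y - x‖ ^ 2 := by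
  let γ : ℝ → E := AffineMap.lineMap x y
  have hγ : Set.MapsTo γ (Set.Icc 0 1) s := hs.mapsTo_lineMap hx hy
  let g : ℝ → F := fun r => f (γ r) - f x - r • f' x (y - x)
  have hg : ∀ r ∈ Set.Icc (0 : ℝ) 1,
      HasDerivWithinAt g (f' (γ r) (y - x) - f' x (y - x)) (Set.Icc 0 1) r := fun r hr => by
    have hline := (hf (γ r) (hγ hr)).comp_hasDerivWithinAt r AffineMap.hasDerivWithinAt_lineMap hγ
    exact ((hline.sub_const (f x)).fun_sub
      ((hasDerivWithinAt_id r _).smul_const (f' x (y - x)))).congr_deriv (by rw [one_smul])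
  have hbound : ∀ r ∈ Set.Ico (0 : ℝ) 1,
      ‖f' (γ r) (y - x) - f' x (y - x)‖ ≤ L * ‖y - x‖ ^ 2 * r := fun r hr => by
    have hγr : ‖γ r - x‖ = r * ‖y - x‖ := by
      simp [γ, AffineMap.lineMap_apply, norm_smul, abs_of_nonneg hr.1]
    calc ‖f' (γ r) (y - x) - f' x (y - x)‖ ≤ ‖f' (γ r) - f' x‖ * ‖y - x‖ :=
          (f' (γ r) - f' x).le_opNorm (y - x)
      _ ≤ L * ‖γ r - x‖ * ‖y - x‖ := by
          gcongr
          exact hf'.norm_sub_le (hγ (Set.Ico_subset_Icc_self hr)) hx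
      _ = L * ‖y - x‖ ^ 2 * r := by rw [hγr]; ring
  have hB : ∀ r : ℝ, HasDerivAt (fun r => L / 2 * ‖y - x‖ ^ 2 * r ^ 2) (L * ‖y - x‖ ^ 2 * r) r :=
    fun r => ((hasDerivAt_pow 2 r).const_mul _).congr_deriv (by push_cast; ring)
  have hg0 : ‖g 0‖ ≤ L / 2 * ‖y - x‖ ^ 2 * 0 ^ 2 := by simp [g, γ]
  simpa [g, γ] using image_norm_le_of_norm_deriv_right_le_deriv_boundary
    (fun r hr => (hg r hr).continuousWithinAt)
    (fun r hr => (hg r (Set.Ico_subset_Icc_self hr)).mono_of_mem_nhdsWithin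
      (Icc_mem_nhdsGE_of_mem hr))
    hg0 hB hbound (Set.right_mem_Icc.2 zero_le_one)

theorem image_add_smul_le_add_mul_of_lipschitzOnWith_hasFDerivWithinAt {f : E → ℝ}
    {f' : E → E →L[ℝ] ℝ} (hs : Convex ℝ s) (hf : ∀ z ∈ s, HasFDerivWithinAt f (f' z) s z)
    (hf' : LipschitzOnWith L f' s) {x d : E} {t c : ℝ} (hx : x ∈ s) (hxt : x + t • d ∈ s)
    (ht : 0 ≤ t) (htc : t * (L * ‖d‖ ^ 2) ≤ 2 * (c - f' x d)) :
    f (x + t • d) ≤ f x + t * c := by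
  have htaylor := (Real.le_norm_self _).trans
    (norm_image_sub_sub_le_of_lipschitzOnWith_hasFDerivWithinAt hs hf hf' hx hxt)
  rw [add_sub_cancel_left, map_smul, smul_eq_mul, norm_smul, Real.norm_of_nonneg ht] at htaylor
  calc f (x + t • d) ≤ f x + t * (f' x d + t * (L * ‖d‖ ^ 2) / 2) := by linarith
    _ ≤ f x + t * c := by gcongr; linarith

end Descent

theorem norm_apply_symm_sub_le {𝕜 E F : Type*} [NontriviallyNormedField 𝕜]
    [SeminormedAddCommGroup E] [NormedSpace 𝕜 E] [SeminormedAddCommGroup F] [NormedSpace 𝕜 F]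
    (A : E →L[𝕜] F) (K : E ≃L[𝕜] F) {M ρ : ℝ} (hM : ‖(K.symm : F →L[𝕜] E)‖ ≤ M)
    (hρ : ‖A - (K : E →L[𝕜] F)‖ ≤ ρ) (v : F) :
    ‖A (K.symm v) - v‖ ≤ ρ * M * ‖v‖ := by
  calc ‖A (K.symm v) - v‖ = ‖(A - (K : E →L[𝕜] F)) (K.symm v)‖ := by simp
    _ ≤ ρ * ‖K.symm v‖ := ContinuousLinearMap.le_of_opNorm_le _ hρ _
    _ ≤ ρ * (M * ‖v‖) := by
        have hρ₀ : 0 ≤ ρ := (norm_nonneg _).trans hρ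
        gcongr
        exact (K.symm : F →L[𝕜] E).le_of_opNorm_le hM v
    _ = ρ * M * ‖v‖ := (mul_assoc _ _ _).symm

theorem one_sub_mul_norm_sq_le_inner_of_norm_sub_le {F : Type*} [SeminormedAddCommGroup F]
    [InnerProductSpace ℝ F] {v w : F} {c : ℝ} (h : ‖w - v‖ ≤ c * ‖v‖) :
    (1 - c) * ‖v‖ ^ 2 ≤ ⟪v, w⟫_ℝ := by
  have hcs : -(‖v‖ * (c * ‖v‖)) ≤ ⟪v, w - v⟫_ℝ :=
    (neg_le_neg (by gcongr)).trans (neg_le_of_abs_le (abs_real_inner_le_norm v (w - v)))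
  rw [inner_sub_right, real_inner_self_eq_norm_sq] at hcs
  linarith

theorem fderiv_half_norm_sq_apply {E F : Type*} [NormedAddCommGroup E] [NormedSpace ℝ E]
    [NormedAddCommGroup F] [InnerProductSpace ℝ F] {G : E → F} {x : E}
    (hG : DifferentiableAt ℝ G x) (d : E) :
    fderiv ℝ (fun y => (1 / 2) * ‖G y‖ ^ 2) x d = ⟪G x, fderiv ℝ G x d⟫_ℝ := by
  rw [(hG.hasFDerivAt.norm_sq.const_mul (1 / 2)).fderiv]
  simp

theorem lipschitzWith_gradient_iff {𝕜 E : Type*} [RCLike 𝕜] [NormedAddCommGroup E]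
    [InnerProductSpace 𝕜 E] [CompleteSpace E] {f : E → 𝕜} {L : ℝ≥0} :
    LipschitzWith L (gradient f) ↔ LipschitzWith L (fderiv 𝕜 f) := by
  rw [← toDual_comp_gradient, (InnerProductSpace.toDual 𝕜 E).isometry.lipschitzWith_iff]

theorem statement_18_general {E F : Type*} [NormedAddCommGroup E] [NormedSpace ℝ E]
    [NormedAddCommGroup F] [InnerProductSpace ℝ F] {G : E → F} {θ : E → ℝ}
    (hθ : θ = fun y => (1 / 2) * ‖G y‖ ^ 2) {s : Set E} (hs : Convex ℝ s)
    (hθdiff : ∀ y ∈ s, DifferentiableAt ℝ θ y) {L : ℝ≥0}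
    (hLip : LipschitzOnWith L (fderiv ℝ θ) s) {x : E} (hx : x ∈ s) (hG : DifferentiableAt ℝ G x)
    (K : E ≃L[ℝ] F) {M ρ σ t : ℝ} (hM : ‖(K.symm : F →L[ℝ] E)‖ ≤ M)
    (hρ : ‖fderiv ℝ G x - (K : E →L[ℝ] F)‖ ≤ ρ) {Δx : E} (hΔx : Δx = -(K.symm (G x)))
    (hxt : x + t • Δx ∈ s) (ht : 0 ≤ t) (htle : t * (L * M ^ 2) ≤ 2 * (1 - ρ * M - σ)) :
    θ (x + t • Δx) ≤ (1 - 2 * t * σ) * θ x := by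
  have hslope : fderiv ℝ θ x Δx ≤ -((1 - ρ * M) * ‖G x‖ ^ 2) := by
    rw [hθ, hΔx, fderiv_half_norm_sq_apply hG, map_neg, inner_neg_right, neg_le_neg_iff]
    exact one_sub_mul_norm_sq_le_inner_of_norm_sub_le
      (norm_apply_symm_sub_le (fderiv ℝ G x) K hM hρ (G x))
  have hstep : ‖Δx‖ ≤ M * ‖G x‖ := by
    rw [hΔx, norm_neg]
    exact (K.symm : F →L[ℝ] E).le_of_opNorm_le hM (G x)
  have hquad : t * (L * ‖Δx‖ ^ 2) ≤ 2 * (-σ * ‖G x‖ ^ 2 - fderiv ℝ θ x Δx) := by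
    calc t * (L * ‖Δx‖ ^ 2) ≤ t * (L * (M * ‖G x‖) ^ 2) := by gcongr
      _ = t * (L * M ^ 2) * ‖G x‖ ^ 2 := by ring
      _ ≤ 2 * (1 - ρ * M - σ) * ‖G x‖ ^ 2 := by gcongr
      _ ≤ 2 * (-σ * ‖G x‖ ^ 2 - fderiv ℝ θ x Δx) := by linarith
  calc θ (x + t • Δx) ≤ θ x + t * (-σ * ‖G x‖ ^ 2) :=
        image_add_smul_le_add_mul_of_lipschitzOnWith_hasFDerivWithinAt hs
          (fun y hy => (hθdiff y hy).hasFDerivAt.hasFDerivWithinAt) hLip hx hxt ht hquad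
    _ = (1 - 2 * t * σ) * θ x := by rw [hθ]; ring

/-- sufficiently small step lengths satisfy the Armijo condition for the
merit function `θ = ½‖G‖²` along the regularized Newton direction `Δx = −K⁻¹G(x)`.
Here `M ≥ ‖K⁻¹‖`, `ρ ≥ ‖DG(x) − K‖`, `1 − ρM > σ ∈ (0,½)`, and the gradient of `θ` is
Lipschitz with constant `L_θ > 0`; then every `t` with `0 < t ≤ 1` and
`t ≤ 2(1 − ρM − σ)/(L_θ M²)` satisfies `θ(x + tΔx) ≤ (1 − 2tσ)θ(x)`. -/
theorem statement_18 {E : Type*} [NormedAddCommGroup E] [InnerProductSpace ℝ E]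
    [FiniteDimensional ℝ E]
    (G : E → E) (hG : Differentiable ℝ G)
    (θ : E → ℝ) (hθ : θ = fun y => (1 / 2) * ‖G y‖ ^ 2)
    (hθdiff : Differentiable ℝ θ)
    (Lθ : ℝ) (hLθ : 0 < Lθ)
    (hgradLip : LipschitzWith (Real.toNNReal Lθ) (fun y => gradient θ y))
    (x : E) (hx : G x ≠ 0)
    (σ : ℝ) (hσ : σ ∈ Set.Ioo (0 : ℝ) (1 / 2))
    (K : E ≃L[ℝ] E) (M ρ : ℝ)
    (hM : ‖(K.symm : E →L[ℝ] E)‖ ≤ M)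
    (hρ : ‖fderiv ℝ G x - (K : E →L[ℝ] E)‖ ≤ ρ)
    (hcond : σ < 1 - ρ * M)
    (Δx : E) (hΔx : Δx = -(K.symm (G x))) :
    ∀ t : ℝ, 0 < t → t ≤ 1 → t ≤ 2 * (1 - ρ * M - σ) / (Lθ * M ^ 2) →
      θ (x + t • Δx) ≤ (1 - 2 * t * σ) * θ x := by
  intro t ht _ htle
  exact statement_18_general hθ convex_univ (fun y _ => hθdiff y)
    (lipschitzWith_gradient_iff.1 hgradLip).lipschitzOnWith (Set.mem_univ x) (hG x) K hM hρ hΔx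
    (Set.mem_univ _) ht.le
    (mul_le_of_le_div₀ (by linarith) (by positivity) (by rwa [Real.coe_toNNReal _ hLθ.le]))
end

section
/- Let E be a finite-dimensional real inner product space, G : E → E continuously differentiable on a neighborhood of x*, with G(x*) = 0, with DG Lipschitz continuous on a neighborhood of x*, and with DG(x*) invertible. Fix γ ≥ 0 and σ ∈ (0, ½). Then there exists r > 0 such that for every x with ‖x − x*‖ ≤ r and every invertible linear map K : E → E with ‖K − DG(x)‖ ≤ γ‖G(x)‖, the full Newton step Δx = −K⁻¹G(x) satisfies ½‖G(x + Δx)‖² ≤ (1 − 2σ)·½‖G(x)‖²; i.e. the unit step t = 1 satisfies the Armijo condition near x*. -/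
/-!
Put `A = DG(x*)` and let `x → x*`. The regularization error tends to `0`, so `K → A`, and the
Newton step `d` satisfies `K d - A d = o(d)`. Since `A` is bounded below, so is `K` near `A`, whence
`d = O(K d) = O(G x)`; in particular `d → 0`. Strict differentiability of `G` at `x*` then gives
`G (x + d) = G x + A d + o(d) = A d - K d + o(d) = o(d) = o(G x)`,
which beats every fixed decrease factor `1 - 2 σ > 0`.
-/

open Asymptotics Filter Topology

section NewtonStep

variable {α 𝕜 E F : Type*} [NontriviallyNormedField 𝕜]
  [NormedAddCommGroup E] [NormedSpace 𝕜 E] [NormedAddCommGroup F] [NormedSpace 𝕜 F]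
  {l : Filter α} {K : α → E →L[𝕜] F} {A : E →L[𝕜] F} {C : NNReal} {G : E → F} {xs : E}

theorem isLittleO_clm_apply_sub_of_tendsto (hK : Tendsto K l (𝓝 A)) (v : α → E) :
    (fun a => K a (v a) - A (v a)) =o[l] v := by
  have hnorm : Tendsto (fun a => ‖K a - A‖) l (𝓝 0) := tendsto_iff_norm_sub_tendsto_zero.1 hK
  refine isLittleO_iff.2 fun c hc => ?_
  filter_upwards [hnorm.eventually_le_const hc] with a ha
  exact (K a - A).le_of_opNorm_le ha (v a)

theorem isBigO_clm_apply_of_antilipschitzWith (hA : AntilipschitzWith C A) (hK : Tendsto K l (𝓝 A))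
    (v : α → E) : v =O[l] fun a => K a (v a) := by
  have hAv : v =O[l] fun a => A (v a) :=
    .of_bound C (.of_forall fun a => A.bound_of_antilipschitz hA (v a))
  have hKA : (fun a => K a (v a) - A (v a)) =o[l] fun a => A (v a) :=
    (isLittleO_clm_apply_sub_of_tendsto hK v).trans_isBigO hAv
  simpa only [sub_add_cancel] using hAv.trans hKA.right_isBigO_add

theorem isLittleO_newton_residual (hG : HasStrictFDerivAt G A xs) (hroot : G xs = 0)
    (hA : AntilipschitzWith C A) {x d : α → E} (hx : Tendsto x l (𝓝 xs))
    (hK : Tendsto K l (𝓝 A)) (hd : ∀ᶠ a in l, K a (d a) = -G (x a)) :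
    (fun a => G (x a + d a)) =o[l] fun a => G (x a) := by
  have hd_bigO : d =O[l] fun a => G (x a) :=
    ((isBigO_clm_apply_of_antilipschitzWith hA hK d).congr' .rfl hd).of_neg_right
  have hd_zero : Tendsto d l (𝓝 0) :=
    hd_bigO.trans_tendsto (hroot ▸ hG.continuousAt.tendsto.comp hx)
  have hpair : Tendsto (fun a => (x a + d a, x a)) l (𝓝 (xs, xs)) := by
    simpa only [add_zero] using (hx.add hd_zero).prodMk_nhds hx
  have hlin : (fun a => G (x a + d a) - G (x a) - A (d a)) =o[l] d := by
    simpa only [Function.comp_def, add_sub_cancel_left] using hG.isLittleO.comp_tendsto hpair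
  refine (hlin.sub (isLittleO_clm_apply_sub_of_tendsto hK d)).trans_isBigO hd_bigO |>.congr' ?_ .rfl
  filter_upwards [hd] with a ha
  rw [ha]
  abel

theorem eventually_forall_norm_newton_residual_le (hG : HasStrictFDerivAt G A xs)
    (hroot : G xs = 0) (hA : AntilipschitzWith C A) {e : E → ℝ} (he : Tendsto e (𝓝 xs) (𝓝 0))
    {c : ℝ} (hc : 0 < c) :
    ∀ᶠ x in 𝓝 xs, ∀ (K : E →L[𝕜] F) (d : E), ‖K - A‖ ≤ e x → K d = -G x →
      ‖G (x + d)‖ ≤ c * ‖G x‖ := by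
  -- The filter of triples `(x, K, d)` with `x → xs` makes the little-o uniform in `K` and `d`.
  let l : Filter (E × (E →L[𝕜] F) × E) :=
    comap Prod.fst (𝓝 xs) ⊓ 𝓟 {p | ‖p.2.1 - A‖ ≤ e p.1 ∧ p.2.1 p.2.2 = -G p.1}
  have hx : Tendsto Prod.fst l (𝓝 xs) := tendsto_comap.mono_left inf_le_left
  have hmem : ∀ᶠ p in l, ‖p.2.1 - A‖ ≤ e p.1 ∧ p.2.1 p.2.2 = -G p.1 :=
    mem_inf_of_right (mem_principal_self _)
  have hK : Tendsto (fun p : E × (E →L[𝕜] F) × E => p.2.1) l (𝓝 A) :=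
    tendsto_iff_norm_sub_tendsto_zero.2 <| squeeze_zero' (.of_forall fun _ => norm_nonneg _)
      (hmem.mono fun _ hp => hp.1) (he.comp hx)
  have hres := (isLittleO_newton_residual hG hroot hA hx hK (hmem.mono fun _ hp => hp.2)).bound hc
  filter_upwards [eventually_comap.1 (eventually_inf_principal.1 hres)] with x h K d hKA hKd
  exact h (x, K, d) rfl ⟨hKA, hKd⟩

end NewtonStep

theorem statement_19_general {𝕜 E F : Type*} [RCLike 𝕜] [NormedAddCommGroup E] [NormedSpace 𝕜 E]
    [NormedAddCommGroup F] [NormedSpace 𝕜 F] {G : E → F} {xs : E} (hroot : G xs = 0)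
    (hG : ContDiffAt 𝕜 1 G xs) (hinv : (fderiv 𝕜 G xs).IsInvertible) (γ : ℝ) {σ : ℝ}
    (hσ : σ < 1 / 2) :
    ∃ r > (0 : ℝ), ∀ x : E, ‖x - xs‖ ≤ r →
      ∀ K : E ≃L[𝕜] F, ‖(K : E →L[𝕜] F) - fderiv 𝕜 G x‖ ≤ γ * ‖G x‖ →
        (1 / 2) * ‖G (x + -(K.symm (G x)))‖ ^ 2 ≤ (1 - 2 * σ) * ((1 / 2) * ‖G x‖ ^ 2) := by
  obtain ⟨A, hA⟩ := hinv
  have hstrict : HasStrictFDerivAt G (A : E →L[𝕜] F) xs :=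
    hA ▸ hG.hasStrictFDerivAt one_ne_zero
  have herror : Tendsto (fun x => γ * ‖G x‖ + ‖fderiv 𝕜 G x - A‖) (𝓝 xs) (𝓝 0) := by
    have hDG : Tendsto (fun x => ‖fderiv 𝕜 G x - A‖) (𝓝 xs) (𝓝 0) :=
      tendsto_iff_norm_sub_tendsto_zero.1 (hA ▸ hG.continuousAt_fderiv one_ne_zero)
    simpa [hroot] using (hG.continuousAt.tendsto.norm.const_mul γ).add hDG
  have hfactor : 0 < 1 - 2 * σ := by linarith
  obtain ⟨r, hr, hball⟩ := Metric.nhds_basis_closedBall.eventually_iff.1 <|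
    eventually_forall_norm_newton_residual_le hstrict hroot A.antilipschitz herror
      (Real.sqrt_pos.2 hfactor)
  refine ⟨r, hr, fun x hx K hK => ?_⟩
  have hKA : ‖(K : E →L[𝕜] F) - A‖ ≤ γ * ‖G x‖ + ‖fderiv 𝕜 G x - A‖ :=
    (norm_sub_le_norm_sub_add_norm_sub _ (fderiv 𝕜 G x) _).trans (by gcongr)
  have hres : ‖G (x + -(K.symm (G x)))‖ ≤ √(1 - 2 * σ) * ‖G x‖ :=
    hball (mem_closedBall_iff_norm.2 hx) K _ hKA (by simp)
  calc (1 / 2) * ‖G (x + -(K.symm (G x)))‖ ^ 2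
      ≤ (1 / 2) * (√(1 - 2 * σ) * ‖G x‖) ^ 2 := by gcongr
    _ = (1 - 2 * σ) * ((1 / 2) * ‖G x‖ ^ 2) := by
      rw [mul_pow, Real.sq_sqrt hfactor.le]
      ring

/-- acceptance of unit steps near the solution. If `G` is C¹ on a
neighborhood of a root `x*`, `DG` is Lipschitz on a neighborhood of `x*`, and `DG(x*)`
is invertible, then for any `γ ≥ 0` and `σ ∈ (0,½)` there is `r > 0` such that for all
`x` with `‖x − x*‖ ≤ r` and all invertible linear maps `K` with
`‖K − DG(x)‖ ≤ γ‖G(x)‖`, the full Newton step `Δx = −K⁻¹G(x)` satisfies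
`½‖G(x + Δx)‖² ≤ (1 − 2σ)·½‖G(x)‖²`. -/
theorem statement_19 {E : Type*} [NormedAddCommGroup E] [InnerProductSpace ℝ E]
    [FiniteDimensional ℝ E]
    (G : E → E) (xs : E) (hroot : G xs = 0)
    (s : Set E) (hs : s ∈ nhds xs) (hC1 : ContDiffOn ℝ 1 G s)
    (t : Set E) (ht : t ∈ nhds xs) (LG : NNReal)
    (hLip : LipschitzOnWith LG (fun x => fderiv ℝ G x) t)
    (hinv : IsUnit (fderiv ℝ G xs))
    (γ : ℝ) (hγ : 0 ≤ γ) (σ : ℝ) (hσ : σ ∈ Set.Ioo (0 : ℝ) (1 / 2)) :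
    ∃ r > (0 : ℝ), ∀ x : E, ‖x - xs‖ ≤ r →
      ∀ K : E ≃L[ℝ] E, ‖(K : E →L[ℝ] E) - fderiv ℝ G x‖ ≤ γ * ‖G x‖ →
        (1 / 2) * ‖G (x + -(K.symm (G x)))‖ ^ 2 ≤ (1 - 2 * σ) * ((1 / 2) * ‖G x‖ ^ 2) :=
  statement_19_general hroot (hC1.contDiffAt hs)
    ⟨ContinuousLinearEquiv.unitsEquiv ℝ E hinv.unit, rfl⟩ γ hσ.2
end
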